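/- arXiv:1212.0740 — 2 statements merged into one kernel-verified Lean document; each statement's English description precedes it below -/
import Mathlib

section
/- For every a ∈ k, the stabilizer in G of the element e_{-1} + a·e_{p-2} of the Witt algebra W is trivial: if σ is a Lie algebra automorphism of W with σ(e_{-1} + a·e_{p-2}) = e_{-1} + a·e_{p-2}, then σ is the identity. -/
open Polynomial

set_option synthInstance.maxHeartbeats 1000000
set_option maxHeartbeats 1000000

noncomputable section

/-- The truncated polynomial ring `A = k[X]/(X^p)`. -/
abbrev TruncPoly (k : Type*) [Field k] (p : ℕ) : Type _ :=
  k[X] ⧸ Ideal.span {(X : k[X]) ^ p}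

/-- The image `x` of `X` in `A = k[X]/(X^p)`. -/
def xgen (k : Type*) [Field k] (p : ℕ) : TruncPoly k p :=
  Ideal.Quotient.mk _ (X : k[X])

/-- The Witt algebra `W = Der_k(A)`, a Lie algebra over `k`.
Its `k`-basis is `e_i = x^(i+1)∂` for `-1 ≤ i ≤ p-2`; below, `E n` denotes
`x^n • ∂`, i.e. `E n = e_(n-1)`, so the basis is `E 0, …, E (p-1)`. -/
abbrev Witt (k : Type*) [Field k] (p : ℕ) : Type _ :=
  Derivation k (TruncPoly k p) (TruncPoly k p)

/-- The Zariski closure of a subset of affine `n`-space `k^n`:  the zero locus of the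
vanishing ideal of `S`, i.e. the set of points at which every polynomial vanishing
identically on `S` vanishes. -/
def zariskiClosure (k : Type*) [CommSemiring k] {n : ℕ} (S : Set (Fin n → k)) :
    Set (Fin n → k) :=
  {y | ∀ f : MvPolynomial (Fin n) k,
      (∀ s ∈ S, MvPolynomial.eval s f = 0) → MvPolynomial.eval y f = 0}

/-!
Write `W_(i)` for the span of the `e_j` with `j ≥ i`. For `p > 3` the standard subalgebra `W_(0)` is
the only subalgebra `M` of codimension one. Indeed, let `D ∈ M ∖ W_(0)`. Since `ad D` lowers leading
degrees by one, `e_{p-2} ∈ M` would give `M = W`. Hence `e_{p-2} ∉ M`, so `M` contains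
`e_1 + c e_{p-2}` and `e_{p-3} + c' e_{p-2}`, whose bracket is `(p - 4) e_{p-2}`: a contradiction.

Let now `σ` fix some `D ∉ W_(0)`. Then `σ⁻¹(W_(0))` has codimension one, so `σ` preserves `W_(0)`,
and as `W = k D + W_(0)`, the image of `σ - 1` lies in `W_(0)`. This image is stable under `ad D`,
and repeatedly lowering leading degrees takes any nonzero element of `W_(0)` out of `W_(0)`; so
`σ = 1`.
-/

section LinearAlgebra

theorem isUnit_natCast_of_pos_of_lt (k : Type*) {A : Type*} [Field k] [Semiring A] [Algebra k A]
    {p : ℕ} [CharP k p] {n : ℕ} (hn : 0 < n) (hnp : n < p) : IsUnit (n : A) := by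
  have hk : (n : k) ≠ 0 := fun h ↦
    Nat.not_dvd_of_pos_of_lt hn hnp ((CharP.cast_eq_zero_iff k p n).1 h)
  simpa only [map_natCast] using hk.isUnit.map (algebraMap k A)

theorem isCoatom_comap_of_notMem {R M N : Type*} [Ring R] [AddCommGroup M] [Module R M]
    [AddCommGroup N] [Module R N] {s : Submodule R N} (hs : IsCoatom s) (f : M →ₗ[R] N) {z : M}
    (hz : f z ∉ s) : IsCoatom (s.comap f) := by
  have : IsSimpleModule R (N ⧸ s) := isSimpleModule_iff_isCoatom.2 hs
  have hne : s.mkQ ∘ₗ f ≠ 0 := fun h ↦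
    hz ((Submodule.Quotient.mk_eq_zero s).1 (LinearMap.congr_fun h z))
  have hker : (s.mkQ ∘ₗ f).ker = s.comap f := by rw [LinearMap.ker_comp, Submodule.ker_mkQ]
  exact hker ▸ LinearMap.isCoatom_ker_of_surjective (LinearMap.surjective_of_ne_zero hne)

variable {K V : Type*} [Field K] [AddCommGroup V] [Module K V] {s : Submodule K V}

theorem exists_add_smul_mem_of_isCoatom (hs : IsCoatom s) {z : V} (hz : z ∉ s) (v : V) :
    ∃ c : K, v + c • z ∈ s := by
  have hv : v ∈ s ⊔ K ∙ z :=
    (Submodule.isCompl_span_singleton_of_isCoatom_of_notMem hs hz).sup_eq_top ▸ Submodule.mem_top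
  obtain ⟨w, hw, _, hc, rfl⟩ := Submodule.mem_sup.1 hv
  obtain ⟨c, rfl⟩ := Submodule.mem_span_singleton.1 hc
  exact ⟨-c, by rwa [neg_smul, add_neg_cancel_right]⟩

theorem range_sub_id_le_of_isCoatom (hs : IsCoatom s) {f : V →ₗ[K] V} (hfs : s ≤ s.comap f)
    {z : V} (hz : z ∉ s) (hfz : f z = z) : (f - LinearMap.id).range ≤ s := by
  rintro _ ⟨v, rfl⟩
  obtain ⟨c, hc⟩ := exists_add_smul_mem_of_isCoatom hs hz v
  have hsub : f (v + c • z) - (v + c • z) = f v - v := by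
    rw [map_add, map_smul, hfz, add_sub_add_right_eq_sub]
  rw [LinearMap.sub_apply, LinearMap.id_apply, ← hsub]
  exact s.sub_mem (hfs hc) hc

theorem lie_mem_range_sub_id {R L : Type*} [CommRing R] [LieRing L] [LieAlgebra R L]
    (σ : L →ₗ⁅R⁆ L) {u v : L} (hu : σ u = u)
    (hv : v ∈ ((σ : L →ₗ[R] L) - LinearMap.id).range) :
    ⁅u, v⁆ ∈ ((σ : L →ₗ[R] L) - LinearMap.id).range := by
  obtain ⟨w, rfl⟩ := hv
  refine ⟨⁅u, w⁆, ?_⟩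
  simp only [LinearMap.sub_apply, LinearMap.id_apply, LieHom.coe_toLinearMap, LieHom.map_lie, hu,
    lie_sub]

variable {L : Type*} [LieRing L] [LieAlgebra K L]

theorem lieHom_apply_eq_self_of_isCoatom {s : Submodule K L} (hs : IsCoatom s) {u : L}
    (hu : u ∉ s) (hbot : ∀ N ≤ s, (∀ v ∈ N, ⁅u, v⁆ ∈ N) → N = ⊥) {σ : L →ₗ⁅K⁆ L} (hσu : σ u = u)
    (hσs : s ≤ s.comap (σ : L →ₗ[K] L)) (v : L) : σ v = v := by
  have hrange : ((σ : L →ₗ[K] L) - LinearMap.id).range = ⊥ :=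
    hbot _ (range_sub_id_le_of_isCoatom hs hσs hu hσu) fun _ ↦ lie_mem_range_sub_id σ hσu
  exact sub_eq_zero.1 (LinearMap.congr_fun (LinearMap.range_eq_bot.1 hrange) v)

theorem lie_mem_of_isCoatom {M : LieSubalgebra K L} (hM : IsCoatom M.toSubmodule) {u v z : L}
    (hz : z ∉ M) (hu : ⁅u, z⁆ = 0) (hv : ⁅v, z⁆ = 0) : ⁅u, v⁆ ∈ M := by
  obtain ⟨c, hc⟩ := exists_add_smul_mem_of_isCoatom hM hz u
  obtain ⟨d, hd⟩ := exists_add_smul_mem_of_isCoatom hM hz v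
  have hzv : ⁅z, v⁆ = 0 := by rw [← lie_skew, hv, neg_zero]
  have hlie : ⁅u + c • z, v + d • z⁆ = ⁅u, v⁆ := by
    simp only [lie_add, add_lie, lie_smul, smul_lie, hu, hzv, lie_self, smul_zero, add_zero]
  exact hlie ▸ M.lie_mem hc hd

end LinearAlgebra

section TruncPoly

variable {k : Type*} [Field k] {p : ℕ}

theorem xgen_pow_dvd_mk_iff {n : ℕ} (hn : n ≤ p) (q : k[X]) :
    xgen k p ^ n ∣ Ideal.Quotient.mk (Ideal.span {(X : k[X]) ^ p}) q ↔ X ^ n ∣ q := by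
  refine ⟨?_, fun h ↦ by simpa only [xgen, map_pow] using _root_.map_dvd (Ideal.Quotient.mk _) h⟩
  rintro ⟨r, hr⟩
  obtain ⟨r, rfl⟩ := Ideal.Quotient.mk_surjective r
  rw [xgen, ← map_pow, ← map_mul, Ideal.Quotient.mk_eq_mk_iff_sub_mem,
    Ideal.mem_span_singleton] at hr
  exact (dvd_sub_left (dvd_mul_right _ _)).1 ((pow_dvd_pow X hn).trans hr)

theorem xgen_pow_self : xgen k p ^ p = 0 := by
  rw [xgen, ← map_pow]
  exact Ideal.Quotient.eq_zero_iff_mem.2 (Ideal.mem_span_singleton_self _)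

theorem xgen_dvd_of_pow_succ_dvd_pow_mul {n : ℕ} (hn : n < p) {g : TruncPoly k p}
    (h : xgen k p ^ (n + 1) ∣ xgen k p ^ n * g) : xgen k p ∣ g := by
  obtain ⟨q, rfl⟩ := Ideal.Quotient.mk_surjective g
  have hX : (X : k[X]) ^ n * X ∣ X ^ n * q := by
    rwa [← pow_succ, ← xgen_pow_dvd_mk_iff hn, map_mul, map_pow]
  have hq : X ^ 1 ∣ q := by
    rw [pow_one]
    exact (mul_dvd_mul_iff_left (pow_ne_zero n X_ne_zero)).1 hX
  simpa only [pow_one] using (xgen_pow_dvd_mk_iff (by omega) q).2 hq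

theorem isUnit_of_not_xgen_dvd {u : TruncPoly k p} (hu : ¬ xgen k p ∣ u) : IsUnit u := by
  obtain ⟨q, rfl⟩ := Ideal.Quotient.mk_surjective u
  have hq : ¬ X ∣ q := fun h ↦ hu (_root_.map_dvd (Ideal.Quotient.mk _) h)
  obtain ⟨b, c, hbc⟩ : IsCoprime (X ^ p) q := (irreducible_X.coprime_iff_not_dvd.2 hq).pow_left
  refine IsUnit.of_mul_eq_one (Ideal.Quotient.mk _ c) ?_
  rw [← map_mul, ← map_one (Ideal.Quotient.mk _), Ideal.Quotient.mk_eq_mk_iff_sub_mem,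
    Ideal.mem_span_singleton]
  exact ⟨-b, by linear_combination hbc⟩

variable (k p) in
/-- The augmentation `A → k`, evaluation at `x = 0`. -/
def truncConstantCoeff [NeZero p] : TruncPoly k p →ₐ[k] k :=
  Ideal.Quotient.liftₐ _ (aeval (0 : k)) fun q hq ↦ by
    obtain ⟨r, rfl⟩ := Ideal.mem_span_singleton.1 hq
    simp only [map_mul, map_pow, aeval_X, zero_pow (NeZero.ne p), zero_mul]

theorem truncConstantCoeff_eq_zero_iff [NeZero p] (u : TruncPoly k p) :
    truncConstantCoeff k p u = 0 ↔ xgen k p ∣ u := by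
  obtain ⟨q, rfl⟩ := Ideal.Quotient.mk_surjective u
  have hq : truncConstantCoeff k p (Ideal.Quotient.mk _ q) = q.coeff 0 :=
    (coeff_zero_eq_aeval_zero q).symm
  rw [hq, ← X_dvd_iff, ← pow_one (xgen k p), xgen_pow_dvd_mk_iff (NeZero.one_le), pow_one]

end TruncPoly

section Filtration

variable {k : Type*} [Field k] {p : ℕ}

/-- Evaluation `v ↦ v x`, which identifies `v = f ∂` with its coefficient `f`. -/
def wittCoeff (k : Type*) [Field k] (p : ℕ) : Witt k p →ₗ[k] TruncPoly k p where
  toFun v := v (xgen k p)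
  map_add' _ _ := rfl
  map_smul' _ _ := rfl

/-- The standard filtration of `W` by order of vanishing at `x = 0`. The index is the order of
vanishing: `wittFiltration k p n` is spanned by the `e_i` with `i ≥ n - 1` and is usually written
`W_(n-1)`. -/
def wittFiltration (k : Type*) [Field k] (p n : ℕ) : Submodule k (Witt k p) :=
  ((Ideal.span {xgen k p ^ n}).restrictScalars k).comap (wittCoeff k p)

theorem mem_wittFiltration {n : ℕ} {v : Witt k p} :
    v ∈ wittFiltration k p n ↔ xgen k p ^ n ∣ v (xgen k p) :=
  Ideal.mem_span_singleton

theorem mem_wittFiltration_one {v : Witt k p} :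
    v ∈ wittFiltration k p 1 ↔ xgen k p ∣ v (xgen k p) := by
  rw [mem_wittFiltration, pow_one]

theorem wittFiltration_zero : wittFiltration k p 0 = ⊤ :=
  eq_top_iff.2 fun v _ ↦ mem_wittFiltration.2 (by rw [pow_zero]; exact one_dvd _)

theorem apply_xgen_dvd_apply (v : Witt k p) (f : TruncPoly k p) : v (xgen k p) ∣ v f := by
  obtain ⟨q, rfl⟩ := Ideal.Quotient.mk_surjective f
  have hq : Ideal.Quotient.mkₐ k (Ideal.span {(X : k[X]) ^ p}) = aeval (xgen k p) :=
    algHom_ext (aeval_X _).symm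
  rw [← Ideal.Quotient.mkₐ_eq_mk k, hq, Derivation.map_aeval]
  exact dvd_mul_left _ _

theorem wittFiltration_self : wittFiltration k p p = ⊥ := by
  refine eq_bot_iff.2 fun v hv ↦ ?_
  rw [mem_wittFiltration, xgen_pow_self, zero_dvd_iff] at hv
  refine Derivation.ext fun f ↦ zero_dvd_iff.1 ?_
  exact hv ▸ apply_xgen_dvd_apply v f

theorem wittFiltration_antitone : Antitone (wittFiltration k p) := fun _ _ h _ hv ↦
  mem_wittFiltration.2 ((pow_dvd_pow _ h).trans (mem_wittFiltration.1 hv))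

theorem xgen_pow_add_dvd_apply {m n : ℕ} {v : Witt k p} (hv : v ∈ wittFiltration k p m)
    {f : TruncPoly k p} (hf : xgen k p ^ (n + 1) ∣ f) : xgen k p ^ (m + n) ∣ v f := by
  have hvm (g : TruncPoly k p) : xgen k p ^ m ∣ v g :=
    (mem_wittFiltration.1 hv).trans (apply_xgen_dvd_apply v g)
  obtain ⟨g, rfl⟩ := hf
  rw [Derivation.leibniz, Derivation.leibniz_pow, Nat.add_sub_cancel]
  simp only [smul_eq_mul, nsmul_eq_mul]
  obtain ⟨r, hr⟩ := hvm g
  obtain ⟨s, hs⟩ := hvm (xgen k p)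
  rw [hr, hs]
  exact ⟨xgen k p * r + g * ((n + 1 : ℕ) * s), by ring⟩

theorem lie_mem_wittFiltration {m n : ℕ} {u v : Witt k p} (hu : u ∈ wittFiltration k p (m + 1))
    (hv : v ∈ wittFiltration k p (n + 1)) : ⁅u, v⁆ ∈ wittFiltration k p (m + n + 1) := by
  rw [mem_wittFiltration, Derivation.commutator_apply]
  refine dvd_sub ?_ ?_
  · exact (pow_dvd_pow _ (by omega)).trans (xgen_pow_add_dvd_apply hu (mem_wittFiltration.1 hv))
  · exact (pow_dvd_pow _ (by omega)).trans (xgen_pow_add_dvd_apply hv (mem_wittFiltration.1 hu))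

/-- The standard maximal subalgebra `W_(0)` of the Witt algebra: the derivations preserving the
maximal ideal `(x)` of `A`. -/
def wittStandard (k : Type*) [Field k] (p : ℕ) : LieSubalgebra k (Witt k p) where
  toSubmodule := wittFiltration k p 1
  lie_mem' hu hv := lie_mem_wittFiltration (m := 0) (n := 0) hu hv

theorem isCoatom_wittFiltration_one [NeZero p] {D : Witt k p} (hD : D ∉ wittFiltration k p 1) :
    IsCoatom (wittFiltration k p 1) := by
  have hker : ((truncConstantCoeff k p).toLinearMap ∘ₗ wittCoeff k p).ker = wittFiltration k p 1 :=
    Submodule.ext fun _ ↦ (truncConstantCoeff_eq_zero_iff _).trans mem_wittFiltration_one.symm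
  rw [← hker] at hD ⊢
  exact isCoatom_comap_of_notMem (M := Witt k p) isCoatom_bot _ hD

theorem isUnit_apply_xgen {D : Witt k p} (hD : D ∉ wittFiltration k p 1) : IsUnit (D (xgen k p)) :=
  isUnit_of_not_xgen_dvd (mt mem_wittFiltration_one.2 hD)

theorem exists_apply_xgen_eq {D : Witt k p} (hD : D ∉ wittFiltration k p 1) (f : TruncPoly k p) :
    ∃ v : Witt k p, v (xgen k p) = f := by
  obtain ⟨c, hc⟩ := (isUnit_apply_xgen hD).exists_left_inv
  exact ⟨(f * c) • D, by rw [Derivation.smul_apply, smul_eq_mul, mul_assoc, hc, mul_one]⟩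

theorem add_smul_notMem_wittStandard {δ : Witt k p} (hp : 1 ≤ p) (hδ : δ (xgen k p) = 1) {n : ℕ}
    (hn : 1 ≤ n) (a : k) : δ + a • xgen k p ^ n • δ ∉ wittStandard k p := by
  have hsmul : a • xgen k p ^ n • δ ∈ wittFiltration k p 1 :=
    Submodule.smul_mem _ a <| mem_wittFiltration.2 <|
      (pow_dvd_pow _ hn).trans (dvd_mul_right _ _)
  intro h
  have hone : xgen k p ^ 1 ∣ 1 :=
    hδ ▸ (dvd_add_left (mem_wittFiltration.1 hsmul)).1 (mem_wittFiltration.1 h)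
  rw [← map_one (Ideal.Quotient.mk _), xgen_pow_dvd_mk_iff hp, pow_one, X_dvd_iff,
    coeff_one_zero] at hone
  exact one_ne_zero hone

end Filtration

section LeadingTerms

variable {k : Type*} [Field k] {p : ℕ} {D : Witt k p}

theorem xgen_pow_succ_dvd_lie_apply_sub (D : Witt k p) {n : ℕ} {v : Witt k p} {g : TruncPoly k p}
    (hv : v (xgen k p) = xgen k p ^ (n + 1) * g) :
    xgen k p ^ (n + 1) ∣
      ⁅D, v⁆ (xgen k p) - xgen k p ^ n * ((n + 1 : ℕ) * D (xgen k p) * g) := by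
  obtain ⟨r, hr⟩ := hv ▸ apply_xgen_dvd_apply v (D (xgen k p))
  rw [Derivation.commutator_apply, hr, hv, Derivation.leibniz, Derivation.leibniz_pow,
    Nat.add_sub_cancel]
  simp only [smul_eq_mul, nsmul_eq_mul]
  exact ⟨D g - g * r, by ring⟩

theorem isUnit_succ_mul_apply_xgen [CharP k p] (hD : D ∉ wittFiltration k p 1) {n : ℕ}
    (hn : n + 1 < p) : IsUnit ((n + 1 : ℕ) * D (xgen k p)) :=
  (isUnit_natCast_of_pos_of_lt k n.succ_pos hn).mul (isUnit_apply_xgen hD)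

theorem mem_wittFiltration_succ_of_lie_mem [CharP k p] (hD : D ∉ wittFiltration k p 1) {n : ℕ}
    (hn : n + 1 < p) {v : Witt k p} (hv : v ∈ wittFiltration k p (n + 1))
    (hDv : ⁅D, v⁆ ∈ wittFiltration k p (n + 1)) : v ∈ wittFiltration k p (n + 2) := by
  obtain ⟨g, hg⟩ := mem_wittFiltration.1 hv
  have hdvd : xgen k p ∣ (n + 1 : ℕ) * D (xgen k p) * g :=
    xgen_dvd_of_pow_succ_dvd_pow_mul (by omega) <|
      (dvd_sub_right (mem_wittFiltration.1 hDv)).1 (xgen_pow_succ_dvd_lie_apply_sub D hg)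
  rw [mem_wittFiltration, hg, pow_succ]
  exact mul_dvd_mul_left _ ((isUnit_succ_mul_apply_xgen hD hn).dvd_mul_left.1 hdvd)

theorem exists_lie_add_eq_of_mem_wittFiltration [CharP k p] (hD : D ∉ wittFiltration k p 1) {n : ℕ}
    (hn : n + 1 < p) {v : Witt k p} (hv : v ∈ wittFiltration k p n) :
    ∃ w ∈ wittFiltration k p (n + 1), ∃ r ∈ wittFiltration k p (n + 1), ⁅D, w⁆ + r = v := by
  obtain ⟨h, hh⟩ := mem_wittFiltration.1 hv
  obtain ⟨g, rfl⟩ := (isUnit_succ_mul_apply_xgen hD hn).dvd (a := h)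
  obtain ⟨w, hw⟩ := exists_apply_xgen_eq hD (xgen k p ^ (n + 1) * g)
  refine ⟨w, mem_wittFiltration.2 (hw ▸ dvd_mul_right _ _), v - ⁅D, w⁆, mem_wittFiltration.2 ?_,
    add_sub_cancel ⁅D, w⁆ v⟩
  rw [Derivation.sub_apply, hh, dvd_sub_comm]
  exact xgen_pow_succ_dvd_lie_apply_sub D hw

theorem eq_bot_of_le_wittFiltration_one [CharP k p] (hD : D ∉ wittFiltration k p 1)
    {N : Submodule k (Witt k p)} (hN : N ≤ wittFiltration k p 1) (hDN : ∀ v ∈ N, ⁅D, v⁆ ∈ N) :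
    N = ⊥ := by
  have hle (n : ℕ) (hn : n < p) : N ≤ wittFiltration k p (n + 1) := by
    induction n with
    | zero => exact hN
    | succ n ih =>
      have hNn := ih (by omega)
      exact fun v hv ↦ mem_wittFiltration_succ_of_lie_mem hD hn (hNn hv) (hNn (hDN v hv))
  rw [eq_bot_iff, ← wittFiltration_self]
  rcases p with _ | n
  · exact wittFiltration_zero (k := k) (p := 0) ▸ le_top
  · exact hle n n.lt_succ_self

theorem eq_top_of_wittFiltration_le [CharP k p] (hD : D ∉ wittFiltration k p 1)
    {N : Submodule k (Witt k p)} (hDN : ∀ v ∈ N, ⁅D, v⁆ ∈ N) {n : ℕ} (hn : n < p)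
    (hN : wittFiltration k p n ≤ N) : N = ⊤ := by
  induction n with
  | zero => exact top_le_iff.1 (wittFiltration_zero (k := k) (p := p) ▸ hN)
  | succ n ih =>
    refine ih (by omega) fun v hv ↦ ?_
    obtain ⟨w, hw, r, hr, rfl⟩ := exists_lie_add_eq_of_mem_wittFiltration hD hn hv
    exact N.add_mem (hDN w (hN hw)) (hN hr)

end LeadingTerms

section CodimensionOne

variable {k : Type*} [Field k] {p : ℕ} [Fact p.Prime] [CharP k p]

theorem exists_lie_eq_of_mem_wittFiltration_last (hp : 3 < p) {D : Witt k p}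
    (hD : D ∉ wittFiltration k p 1) {z : Witt k p} (hz : z ∈ wittFiltration k p (p - 1)) :
    ∃ u ∈ wittFiltration k p 2, ∃ v ∈ wittFiltration k p (p - 2), ⁅u, v⁆ = z := by
  obtain ⟨n, rfl⟩ : ∃ n, p = n + 4 := ⟨p - 4, by omega⟩
  have hn : 0 < n := by
    rcases n.eq_zero_or_pos with rfl | hn
    · exact absurd (Fact.out : Nat.Prime (0 + 4)) (by norm_num)
    · exact hn
  obtain ⟨h, hh⟩ := mem_wittFiltration.1 hz
  obtain ⟨g, rfl⟩ :=
    (isUnit_natCast_of_pos_of_lt k hn (show n < n + 4 by omega)).dvd (a := h)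
  obtain ⟨u, hu⟩ := exists_apply_xgen_eq hD (xgen k (n + 4) ^ 2)
  obtain ⟨v, hv⟩ := exists_apply_xgen_eq hD (xgen k (n + 4) ^ (n + 2) * g)
  refine ⟨u, mem_wittFiltration.2 hu.symm.dvd, v, mem_wittFiltration.2 ⟨g, hv⟩, ?_⟩
  rw [← sub_eq_zero, ← Submodule.mem_bot k, ← wittFiltration_self, mem_wittFiltration]
  obtain ⟨r, hr⟩ := hu ▸ apply_xgen_dvd_apply u g
  refine ⟨r, ?_⟩
  rw [Derivation.sub_apply, Derivation.commutator_apply, hu, hv, hh, Derivation.leibniz,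
    Derivation.leibniz_pow, Derivation.leibniz_pow, hu, hv, hr]
  simp only [smul_eq_mul, nsmul_eq_mul, Nat.reduceSub]
  push_cast
  ring

theorem le_wittStandard_of_isCoatom (hp : 3 < p) (M : LieSubalgebra k (Witt k p))
    (hM : IsCoatom M.toSubmodule) : M ≤ wittStandard k p := by
  by_contra hle
  obtain ⟨D, hDM, hD⟩ := SetLike.not_le_iff_exists.1 hle
  have hlast : ¬ wittFiltration k p (p - 1) ≤ M.toSubmodule := fun h ↦
    hM.1 (eq_top_of_wittFiltration_le hD (fun _ ↦ M.lie_mem hDM) (by omega) h)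
  obtain ⟨z, hz, hzM⟩ := SetLike.not_le_iff_exists.1 hlast
  have hlie {w : Witt k p} (hw : w ∈ wittFiltration k p 2) : ⁅w, z⁆ = 0 := by
    rw [← Submodule.mem_bot k, ← wittFiltration_self]
    obtain ⟨q, rfl⟩ : ∃ q, p = q + 2 := ⟨p - 2, by omega⟩
    exact wittFiltration_antitone (by omega) (lie_mem_wittFiltration (m := 1) (n := q) hw hz)
  obtain ⟨u, hu, v, hv, huv⟩ := exists_lie_eq_of_mem_wittFiltration_last hp hD hz
  exact hzM (huv ▸ lie_mem_of_isCoatom hM hzM (hlie hu)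
    (hlie (wittFiltration_antitone (by omega) hv)))

theorem wittStandard_le_comap (hp : 3 < p) (σ : Witt k p →ₗ⁅k⁆ Witt k p) {D : Witt k p}
    (hD : D ∉ wittStandard k p) (hσD : σ D ∉ wittStandard k p) :
    wittStandard k p ≤ (wittStandard k p).comap σ := by
  have hcoatom :=
    isCoatom_comap_of_notMem (isCoatom_wittFiltration_one hD) (σ : Witt k p →ₗ[k] Witt k p) hσD
  have hle : ((wittStandard k p).comap σ).toSubmodule ≤ wittFiltration k p 1 :=
    le_wittStandard_of_isCoatom hp _ hcoatom
  rcases hcoatom.le_iff.1 hle with h | h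
  · exact absurd (h ▸ Submodule.mem_top : D ∈ wittFiltration k p 1) hD
  · exact h.le

end CodimensionOne

theorem witt_stabilizer_trivial_general {k : Type*} [Field k] {p : ℕ} [Fact p.Prime] [CharP k p]
    (hp : 3 < p) {D : Witt k p} (hD : D ∉ wittStandard k p) (σ : Witt k p →ₗ⁅k⁆ Witt k p)
    (hσ : σ D = D) (v : Witt k p) : σ v = v :=
  lieHom_apply_eq_self_of_isCoatom (isCoatom_wittFiltration_one hD) hD
    (fun _ ↦ eq_bot_of_le_wittFiltration_one hD) hσ
    (wittStandard_le_comap hp σ hD (hσ.symm ▸ hD)) v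

/-- the stabilizer in `G = Aut(W)` of `e₋₁ + a·e_(p-2)` is trivial. -/
theorem witt_stabilizer_trivial
    (k : Type*) [Field k] [IsAlgClosed k] (p : ℕ) [Fact p.Prime] [CharP k p]
    (hp : 3 < p)
    (δ : Witt k p) (hδ : δ (xgen k p) = 1)
    (E : ℕ → Witt k p) (hE : ∀ n, E n = (xgen k p) ^ n • δ)
    (a : k) (σ : Witt k p ≃ₗ⁅k⁆ Witt k p)
    (hσ : σ (E 0 + a • E (p - 1)) = E 0 + a • E (p - 1)) :
    ∀ v : Witt k p, σ v = v := by
  have hD : E 0 + a • E (p - 1) ∉ wittStandard k p := by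
    rw [hE, hE, pow_zero, one_smul]
    exact add_smul_notMem_wittStandard (by omega) hδ (by omega) a
  exact witt_stabilizer_trivial_general hp hD σ.toLieHom hσ
end
end

section
/- Let a ∈ k with a ≠ 0, and let B = {b ∈ k : b^{p-1} = -a}. Then the set W(-a) = {w ∈ W : w ≠ 0 and w^p = -a·w} (where w^p denotes the p-fold composition of w as an endomorphism of A) equals the union of the G-orbit of e_{-1} + a·e_{p-2} together with the G-orbits of b·e_0 for all b ∈ B; that is, W(-a) = G(e_{-1} + a·e_{p-2}) ∪ ⋃_{b ∈ B} G(b·e_0). -/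
open Polynomial

set_option synthInstance.maxHeartbeats 1000000
set_option maxHeartbeats 1000000

noncomputable section

/-!
In characteristic `p` the `p`-th power of a derivation is a derivation, and it commutes with every
automorphism of `W` because `ad (w ^ p) = (ad w) ^ p` and `W` has trivial centre. So it suffices to
find, for `w` with `w ^ p = -a • w`, a new generator `y` of the maximal ideal on which `w` acts as
one of the normal forms acts on `x`. Let `ε` be the constant coefficient.

If `ε (w x) ≠ 0`, the Taylor coefficients `ε (w ^ i f)`, `i < p`, are linear coordinates on
`k[X]/(X^p)`. Let `y` be the element whose only nonzero coefficient is `ε (w y) = 1`. By Leibniz,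
Wilson's theorem and `w ^ p = -a • w`, the elements `w y` and `1 + a • y ^ (p - 1)` have the same
Taylor coefficients.

If `ε (w x) = 0`, put `b = ε (∂ (w x))`. The functional `ε ∘ ∂` satisfies
`ε (∂ (w f)) = b * ε (∂ f)`, so `b` is a root of `X ^ p + a X`; it is nonzero since otherwise `w`
is nilpotent. Writing `X ^ p + a X = (X - b) q`, the element `y = q(w) x` is an eigenvector of `w`
for `b`, and `ε (∂ y) = q(b) = a ≠ 0`.
-/

section PthPower

variable {R A B : Type*} [CommRing R] [CommRing A] [Algebra R A] [CommRing B] [Algebra R B]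
variable (p : ℕ) [Fact p.Prime]

lemma charP_end_self (R S : Type*) [CommRing R] [Ring S] [Algebra R S] (p : ℕ) [CharP S p] :
    CharP (Module.End R S) p :=
  charP_of_injective_ringHom (f := (Algebra.lmul R S).toRingHom) Algebra.lmul_injective p

lemma mulLeft_sub_mulRight_pow_char {S : Type*} [Ring S] [Algebra R S] [CharP S p] (s : S) :
    (LinearMap.mulLeft R s - LinearMap.mulRight R s) ^ p =
      LinearMap.mulLeft R (s ^ p) - LinearMap.mulRight R (s ^ p) := by
  have := charP_end_self R S p
  rw [sub_pow_char_of_commute p (LinearMap.commute_mulLeft_right s s), LinearMap.pow_mulLeft,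
    LinearMap.pow_mulRight]

variable [CharP A p] [CharP B p]

/-- The Leibniz rule says that the commutator with `w` sends multiplication by `f` to multiplication
by `w f`; the `p`-th iterate of this commutator is the commutator with `w ^ p`. -/
lemma pow_char_leibniz (w : Derivation R A A) (f g : A) :
    ((w : Module.End R A) ^ p) (f * g) =
      f • ((w : Module.End R A) ^ p) g + g • ((w : Module.End R A) ^ p) f := by
  have := charP_end_self R A p
  set W : Module.End R A := w.toLinearMap
  have commutator_mulLeft : (LinearMap.mulLeft R W - LinearMap.mulRight R W) ∘ₗ LinearMap.mul R A =
      LinearMap.mul R A ∘ₗ W := by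
    ext f g
    simp [W, mul_comm g]
  have commutator_pow := LinearMap.congr_fun₂
    (Module.End.commute_pow_left_of_commute commutator_mulLeft p) f g
  rw [mulLeft_sub_mulRight_pow_char] at commutator_pow
  simp only [LinearMap.coe_comp, Function.comp_apply, LinearMap.sub_apply,
    LinearMap.mulLeft_apply, LinearMap.mulRight_apply, Module.End.mul_apply,
    LinearMap.mul_apply'] at commutator_pow
  rw [smul_eq_mul, smul_eq_mul]
  linear_combination commutator_pow

/-- The `p`-th power of a derivation in characteristic `p`, which is again a derivation: the
`p`-operation of the restricted Lie algebra of derivations. -/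
def pthPower (w : Derivation R A A) : Derivation R A A :=
  Derivation.mk' ((w : Module.End R A) ^ p) (pow_char_leibniz p w)

lemma coe_pthPower (w : Derivation R A A) :
    (pthPower p w : Module.End R A) = (w : Module.End R A) ^ p :=
  rfl

lemma pthPower_apply (w : Derivation R A A) (f : A) :
    pthPower p w f = ((w : Module.End R A) ^ p) f :=
  rfl

lemma pthPower_eq_smul_iff {w : Derivation R A A} {c : R} :
    pthPower p w = c • w ↔ (w : Module.End R A) ^ p = c • (w : Module.End R A) :=
  ⟨fun h ↦ by rw [← coe_pthPower, h, Derivation.coe_smul_linearMap],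
    fun h ↦ Derivation.ext fun f ↦ LinearMap.congr_fun h f⟩

lemma aeval_eq_zero_of_pthPower_eq {w : Derivation R A A} {a : R}
    (hw : pthPower p w = (-a) • w) :
    aeval (w : Module.End R A) (X ^ p + C a * X) = 0 := by
  rw [pthPower_eq_smul_iff] at hw
  rw [map_add, map_mul, map_pow, aeval_X, aeval_C, hw, ← Algebra.smul_def, ← add_smul,
    neg_add_cancel, zero_smul]

lemma ad_pthPower (w : Derivation R A A) :
    LieAlgebra.ad R (Derivation R A A) (pthPower p w) =
      LieAlgebra.ad R (Derivation R A A) w ^ p := by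
  have := charP_end_self R A p
  let toEnd : Derivation R A A →ₗ[R] Module.End R A :=
    { toFun := fun v ↦ v.toLinearMap
      map_add' := fun _ _ ↦ rfl
      map_smul' := fun _ _ ↦ rfl }
  have commutator_toEnd :
      (LinearMap.mulLeft R (toEnd w) - LinearMap.mulRight R (toEnd w)) ∘ₗ toEnd =
        toEnd ∘ₗ LieAlgebra.ad R (Derivation R A A) w :=
    rfl
  have commutator_pow := Module.End.commute_pow_left_of_commute commutator_toEnd p
  rw [mulLeft_sub_mulRight_pow_char] at commutator_pow
  ext v f
  exact congr($commutator_pow v f)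

lemma map_pthPower [LieModule.IsFaithful R (Derivation R B B) (Derivation R B B)]
    (σ : Derivation R A A ≃ₗ⁅R⁆ Derivation R B B) (w : Derivation R A A) :
    σ (pthPower p w) = pthPower p (σ w) := by
  suffices LieAlgebra.ad R _ (σ (pthPower p w)) = LieAlgebra.ad R _ (pthPower p (σ w)) from
    LieModule.ext_of_isFaithful (R := R) (Derivation R B B) fun v ↦ LinearMap.congr_fun this v
  calc
    LieAlgebra.ad R _ (σ (pthPower p w))
      = σ.toLinearEquiv.conj (LieAlgebra.ad R _ w ^ p) := by
        rw [← LieAlgebra.conj_ad_apply, ad_pthPower]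
    _ = σ.toLinearEquiv.conj (LieAlgebra.ad R _ w) ^ p :=
        map_pow σ.toLinearEquiv.conjRingEquiv _ p
    _ = LieAlgebra.ad R _ (pthPower p (σ w)) := by
        rw [LieAlgebra.conj_ad_apply, ad_pthPower]

end PthPower

/-- Transport of derivations along an algebra isomorphism, by conjugation. -/
def derivationConj {R A B : Type*} [CommRing R] [CommRing A] [Algebra R A] [CommRing B]
    [Algebra R B] (φ : A ≃ₐ[R] B) : Derivation R A A ≃ₗ⁅R⁆ Derivation R B B where
  toFun D := Derivation.mk' (φ.toLinearEquiv.conj D) fun f g ↦ by simp [LinearEquiv.conj_apply]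
  invFun D := Derivation.mk' (φ.symm.toLinearEquiv.conj D) fun f g ↦ by
    simp [LinearEquiv.conj_apply]
  map_add' _ _ := by ext; simp [LinearEquiv.conj_apply]
  map_smul' _ _ := by ext; simp [LinearEquiv.conj_apply]
  map_lie' := by
    intros
    ext
    simp [LinearEquiv.conj_apply, Derivation.commutator_apply,
      -Derivation.commutator_coe_linear_map]
  left_inv _ := by ext; simp [LinearEquiv.conj_apply]
  right_inv _ := by ext; simp [LinearEquiv.conj_apply]

lemma derivationConj_apply {R A B : Type*} [CommRing R] [CommRing A] [Algebra R A] [CommRing B]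
    [Algebra R B] (φ : A ≃ₐ[R] B) (D : Derivation R A A) (f : B) :
    derivationConj φ D f = φ (D (φ.symm f)) :=
  rfl

section PowersOfDerivations

variable {R A : Type*} [CommRing R] [CommRing A] [Algebra R A] (w : Derivation R A A)

lemma derivation_pow_succ_mul (y h : A) (n : ℕ) :
    w (y ^ (n + 1) * h) = y ^ n * ((n + 1) * w y * h + y * w h) := by
  simp only [Derivation.leibniz, Derivation.leibniz_pow, smul_eq_mul, nsmul_eq_mul,
    Nat.add_sub_cancel, Nat.cast_add, Nat.cast_one]
  ring

lemma derivation_pow_succ_apply_one (n : ℕ) : ((w : Module.End R A) ^ (n + 1)) 1 = 0 := by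
  rw [pow_succ, Module.End.mul_apply, Derivation.coeFn_coe, Derivation.map_one_eq_zero, map_zero]

section Augmentation

variable {S F : Type*} [CommRing S] [FunLike F A S] [RingHomClass F A S] {ε : F} {y : A}

lemma map_derivation_pow_pow_mul_of_lt (hy : ε y = 0) {i n : ℕ} (hi : i < n) (h : A) :
    ε (((w : Module.End R A) ^ i) (y ^ n * h)) = 0 := by
  induction i generalizing n h with
  | zero => simp [hy, hi.ne']
  | succ i ih =>
    obtain ⟨n, rfl⟩ := Nat.exists_eq_add_one.mpr (Nat.zero_lt_of_lt hi)
    rw [pow_succ, Module.End.mul_apply, Derivation.coeFn_coe, derivation_pow_succ_mul]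
    exact ih (Nat.lt_of_succ_lt_succ hi) _

lemma map_derivation_pow_pow_mul_self (hy : ε y = 0) (n : ℕ) (h : A) :
    ε (((w : Module.End R A) ^ n) (y ^ n * h)) = n.factorial * ε (w y) ^ n * ε h := by
  induction n generalizing h with
  | zero => simp
  | succ n ih =>
    rw [pow_succ, Module.End.mul_apply, Derivation.coeFn_coe, derivation_pow_succ_mul, ih,
      Nat.factorial_succ]
    simp only [map_add, map_mul, map_natCast, map_one, hy]
    push_cast
    ring

end Augmentation

variable {w}

lemma pow_dvd_derivation_pow_apply {y : A} (hw : ∀ f, y ^ 2 ∣ w f) (n : ℕ) (f : A) :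
    y ^ n ∣ ((w : Module.End R A) ^ n) f := by
  induction n with
  | zero => simp
  | succ n ih =>
    obtain ⟨g, hg⟩ := ih
    rw [pow_succ' (w : Module.End R A), Module.End.mul_apply, Derivation.coeFn_coe, hg]
    cases n with
    | zero => simpa using (dvd_pow_self y two_ne_zero).trans (hw g)
    | succ n =>
      rw [derivation_pow_succ_mul, add_assoc, pow_add]
      exact mul_dvd_mul_left _ (dvd_add (((hw y).mul_left _).mul_right _) ((hw g).mul_left _))

variable (p : ℕ) [Fact p.Prime] [CharP A p]

lemma natCast_factorial_pred_eq_neg_one : ((p - 1).factorial : A) = -1 := by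
  have := congrArg (ZMod.castHom (dvd_refl p) A) (ZMod.wilsons_lemma p)
  rwa [map_natCast, map_neg, map_one] at this

lemma pthPower_apply_of_apply_eq_one_add {y : A} (hy : y ^ p = 0) {a : R}
    (hwy : w y = 1 + a • y ^ (p - 1)) : pthPower p w y = (-a) • w y := by
  have two_le : 2 ≤ p := (Fact.out : p.Prime).two_le
  have apply_pow_add_two (j : ℕ) : w (y ^ (j + 2)) = (j + 2 : ℕ) • y ^ (j + 1) := by
    have : y ^ (j + 1) * y ^ (p - 1) = 0 := by
      rw [← pow_add, show j + 1 + (p - 1) = j + p by omega, pow_add, hy, mul_zero]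
    rw [Derivation.leibniz_pow, hwy, smul_eq_mul, mul_add, mul_smul_comm]
    simp [this]
  have pow_apply_pow_succ (j : ℕ) :
      ((w : Module.End R A) ^ j) (y ^ (j + 1)) = (j + 1).factorial • y := by
    induction j with
    | zero => simp
    | succ j ih =>
      rw [pow_succ, Module.End.mul_apply, Derivation.coeFn_coe, apply_pow_add_two, map_nsmul, ih,
        smul_smul, ← Nat.factorial_succ]
  have pow_pred_apply : ((w : Module.End R A) ^ (p - 1)) (y ^ (p - 1)) = - w y := by
    have := pow_apply_pow_succ (p - 2)
    rw [show p - 2 + 1 = p - 1 by omega, nsmul_eq_mul, natCast_factorial_pred_eq_neg_one] at this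
    rw [show p - 1 = (p - 2) + 1 by omega, pow_succ', Module.End.mul_apply,
      show p - 2 + 1 = p - 1 by omega, this]
    simp
  have pow_pred_one : ((w : Module.End R A) ^ (p - 1)) 1 = 0 := by
    simpa [show p - 2 + 1 = p - 1 by omega] using derivation_pow_succ_apply_one w (p - 2)
  calc
    pthPower p w y = ((w : Module.End R A) ^ (p - 1)) (w y) := by
      rw [pthPower_apply, ← pow_sub_one_mul (Fact.out : p.Prime).ne_zero, Module.End.mul_apply,
        Derivation.coeFn_coe]
    _ = (-a) • w y := by
      conv_lhs => rw [hwy]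
      rw [map_add, map_smul, pow_pred_one, pow_pred_apply, zero_add, smul_neg, neg_smul]

lemma pthPower_apply_of_apply_eq_smul {y : A} {b : R} (hwy : w y = b • y) :
    pthPower p w y = b ^ (p - 1) • w y := by
  have pow_apply (j : ℕ) : ((w : Module.End R A) ^ j) y = b ^ j • y := by
    induction j with
    | zero => simp
    | succ j ih => rw [pow_succ', Module.End.mul_apply, ih, map_smul, Derivation.coeFn_coe, hwy,
        smul_smul, pow_succ]
  rw [pthPower_apply, pow_apply, hwy, smul_smul, pow_sub_one_mul (Fact.out : p.Prime).ne_zero]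

end PowersOfDerivations

lemma dual_aeval_apply_eq_eval_mul {R M : Type*} [CommRing R] [AddCommGroup M] [Module R M]
    {T : Module.End R M} {ℓ : Module.Dual R M} {μ : R} (h : ∀ v, ℓ (T v) = μ * ℓ v)
    (q : R[X]) (v : M) : ℓ (aeval T q v) = q.eval μ * ℓ v := by
  induction q using Polynomial.induction_on generalizing v with
  | C c => simp [Module.algebraMap_end_apply]
  | add q r ihq ihr => simp [ihq, ihr, add_mul]
  | monomial n c ih =>
    rw [pow_succ, ← mul_assoc, map_mul, aeval_X, Module.End.mul_apply, ih, h, eval_mul (q := X),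
      eval_X, mul_assoc]

lemma exists_X_sub_C_mul_eq {R : Type*} [CommRing R] (p : ℕ) [Fact p.Prime]
    [CharP R p] {a b : R} (hb : b ^ (p - 1) = -a) :
    ∃ q : R[X], (X - C b) * q = X ^ p + C a * X ∧ q.eval b = a := by
  have isRoot : (X ^ p + C a * X).IsRoot b := by
    simp [← pow_sub_one_mul (Fact.out : p.Prime).ne_zero b, hb]
  obtain ⟨q, hq⟩ := dvd_iff_isRoot.mpr isRoot
  refine ⟨q, hq.symm, ?_⟩
  have := congrArg (fun r ↦ (derivative r).eval b) hq
  simpa [derivative_X_pow] using this.symm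

namespace TruncPoly

variable {k : Type*} [Field k] {p : ℕ}

/-- The universal property of `k[X]/(X^p)`: the algebra homomorphism sending `x` to `y`. -/
def lift {B : Type*} [CommRing B] [Algebra k B] (y : B) (hy : y ^ p = 0) :
    TruncPoly k p →ₐ[k] B :=
  Ideal.Quotient.liftₐ _ (aeval y) fun q hq ↦ by
    obtain ⟨r, rfl⟩ := Ideal.mem_span_singleton.mp hq
    simp [hy]

lemma lift_xgen {B : Type*} [CommRing B] [Algebra k B] {y : B} (hy : y ^ p = 0) :
    lift y hy (xgen k p) = y :=
  (Ideal.Quotient.lift_mk _ _ _).trans (aeval_X y)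

lemma xgen_pow_char : xgen k p ^ p = 0 := by
  rw [xgen, ← map_pow, Ideal.Quotient.eq_zero_iff_mem]
  exact Ideal.mem_span_singleton_self _

lemma mk_eq_aeval (q : k[X]) :
    Ideal.Quotient.mk (Ideal.span {(X : k[X]) ^ p}) q = aeval (xgen k p) q := by
  have : Ideal.Quotient.mkₐ k (Ideal.span {(X : k[X]) ^ p}) = aeval (xgen k p) := by
    ext
    simp [xgen]
  exact congr($this q)

lemma aeval_xgen_surjective : Function.Surjective (aeval (R := k) (xgen k p)) := fun f ↦ by
  obtain ⟨q, rfl⟩ := Ideal.Quotient.mk_surjective f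
  exact ⟨q, (mk_eq_aeval q).symm⟩

lemma aeval_xgen_eq_zero_iff {q : k[X]} : aeval (xgen k p) q = 0 ↔ X ^ p ∣ q := by
  rw [← mk_eq_aeval, Ideal.Quotient.eq_zero_iff_mem, Ideal.mem_span_singleton]

lemma xgen_pow_mul_ne_zero {m : ℕ} (hm : m < p) {u : TruncPoly k p} (hu : IsUnit u) :
    xgen k p ^ m * u ≠ 0 := by
  rw [Ne, hu.mul_left_eq_zero, ← aeval_X (R := k) (xgen k p), ← map_pow, aeval_xgen_eq_zero_iff,
    pow_dvd_pow_iff X_ne_zero not_isUnit_X]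
  exact hm.not_ge

instance : Module.Finite k (TruncPoly k p) :=
  (monic_X_pow p).finite_quotient

lemma finrank_eq : Module.finrank k (TruncPoly k p) = p := by
  rw [finrank_quotient_span_eq_natDegree, natDegree_X_pow]

section NeZero

variable [NeZero p]

variable (k p) in
/-- The constant coefficient, i.e. the augmentation whose kernel is the maximal ideal `(x)`. -/
def constCoeff : TruncPoly k p →ₐ[k] k :=
  lift 0 (zero_pow (NeZero.ne p))

@[simp]
lemma constCoeff_xgen : constCoeff k p (xgen k p) = 0 :=
  lift_xgen _

lemma xgen_dvd_iff {f : TruncPoly k p} : xgen k p ∣ f ↔ constCoeff k p f = 0 := by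
  refine ⟨fun ⟨g, hg⟩ ↦ by simp [hg], fun hf ↦ ?_⟩
  obtain ⟨q, rfl⟩ := aeval_xgen_surjective f
  rw [← aeval_algHom_apply, constCoeff_xgen, ← coeff_zero_eq_aeval_zero, ← X_dvd_iff] at hf
  simpa using map_dvd (aeval (xgen k p)) hf

lemma isUnit_iff {f : TruncPoly k p} : IsUnit f ↔ constCoeff k p f ≠ 0 := by
  refine ⟨fun hf ↦ (hf.map (constCoeff k p)).ne_zero, fun hf ↦ ?_⟩
  have isNilpotent_sub : IsNilpotent (f - algebraMap k _ (constCoeff k p f)) := by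
    obtain ⟨g, hg⟩ := xgen_dvd_iff.mpr
      (show constCoeff k p (f - algebraMap k _ (constCoeff k p f)) = 0 by simp)
    exact ⟨p, by rw [hg, mul_pow, xgen_pow_char, zero_mul]⟩
  simpa using isNilpotent_sub.isUnit_add_right_of_commute
    ((IsUnit.mk0 _ hf).map (algebraMap k _)) (Commute.all _ _)

instance : Nontrivial (TruncPoly k p) :=
  (constCoeff k p).toRingHom.domain_nontrivial

instance [CharP k p] : CharP (TruncPoly k p) p :=
  charP_of_injective_algebraMap (algebraMap k _).injective p

lemma exists_eq_xgen_pow_mul_isUnit {f : TruncPoly k p} (hf : f ≠ 0) :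
    ∃ m < p, ∃ u, IsUnit u ∧ f = xgen k p ^ m * u := by
  obtain ⟨q, rfl⟩ := aeval_xgen_surjective f
  have hq : q ≠ 0 := by
    rintro rfl
    simp at hf
  obtain ⟨r, hqr, hr⟩ := exists_eq_pow_rootMultiplicity_mul_and_not_dvd q hq 0
  rw [C_0, sub_zero] at hqr hr
  set m := rootMultiplicity 0 q
  have eq_mul : aeval (xgen k p) q = xgen k p ^ m * aeval (xgen k p) r := by
    rw [hqr, map_mul, map_pow, aeval_X]
  refine ⟨m, ?_, aeval (xgen k p) r, ?_, eq_mul⟩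
  · by_contra! hm
    exact hf (by rw [eq_mul, pow_eq_zero_of_le hm xgen_pow_char, zero_mul])
  · rwa [isUnit_iff, ← aeval_algHom_apply, constCoeff_xgen, ← coeff_zero_eq_aeval_zero, Ne,
      ← X_dvd_iff]

lemma exists_algEquiv_xgen_eq {u : TruncPoly k p} (hu : IsUnit u) :
    ∃ φ : TruncPoly k p ≃ₐ[k] TruncPoly k p, φ (xgen k p) = xgen k p * u := by
  let φ : TruncPoly k p →ₐ[k] TruncPoly k p :=
    lift (xgen k p * u) (by rw [mul_pow, xgen_pow_char, zero_mul])
  have hφ : φ (xgen k p) = xgen k p * u := lift_xgen _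
  have injective : Function.Injective φ := by
    refine (injective_iff_map_eq_zero φ).mpr fun f ↦ not_imp_not.mp fun hf ↦ ?_
    obtain ⟨m, hm, v, hv, rfl⟩ := exists_eq_xgen_pow_mul_isUnit hf
    rw [map_mul, map_pow, hφ, mul_pow, mul_assoc]
    exact xgen_pow_mul_ne_zero hm ((hu.pow m).mul (hv.map φ))
  have surjective : Function.Surjective φ :=
    (LinearMap.injective_iff_surjective (f := φ.toLinearMap)).mp injective
  exact ⟨AlgEquiv.ofBijective φ ⟨injective, surjective⟩, hφ⟩

end NeZero

end TruncPoly

namespace Witt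

open TruncPoly

variable {k : Type*} [Field k] {p : ℕ}

lemma ext_xgen {v w : Witt k p} (h : v (xgen k p) = w (xgen k p)) : v = w := by
  ext f
  obtain ⟨q, rfl⟩ := aeval_xgen_surjective f
  rw [Derivation.map_aeval, Derivation.map_aeval, h]

section TaylorCoefficients

variable [Fact p.Prime] [CharP k p]

lemma eq_zero_of_constCoeff_pow_apply_eq_zero {w : Witt k p}
    (hw : constCoeff k p (w (xgen k p)) ≠ 0) {f : TruncPoly k p}
    (hf : ∀ i < p, constCoeff k p (((w : Module.End k (TruncPoly k p)) ^ i) f) = 0) : f = 0 := by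
  by_contra hne
  obtain ⟨m, hm, u, hu, rfl⟩ := exists_eq_xgen_pow_mul_isUnit hne
  have := hf m hm
  rw [map_derivation_pow_pow_mul_self w constCoeff_xgen] at this
  have factorial_ne_zero : (m.factorial : k) ≠ 0 := by
    rw [Ne, CharP.cast_eq_zero_iff k p, (Fact.out : p.Prime).dvd_factorial]
    exact hm.not_ge
  exact mul_ne_zero (mul_ne_zero factorial_ne_zero (pow_ne_zero m hw)) (isUnit_iff.mp hu) this

lemma exists_constCoeff_pow_apply_eq {w : Witt k p} (hw : constCoeff k p (w (xgen k p)) ≠ 0)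
    (c : Fin p → k) : ∃ y : TruncPoly k p, ∀ i : Fin p,
      constCoeff k p (((w : Module.End k (TruncPoly k p)) ^ (i : ℕ)) y) = c i := by
  let taylor : TruncPoly k p →ₗ[k] Fin p → k :=
    LinearMap.pi fun i ↦
      (constCoeff k p).toLinearMap ∘ₗ (w : Module.End k (TruncPoly k p)) ^ (i : ℕ)
  have injective : Function.Injective taylor := (injective_iff_map_eq_zero taylor).mpr fun f hf ↦
    eq_zero_of_constCoeff_pow_apply_eq_zero hw fun i hi ↦ congrFun hf ⟨i, hi⟩
  have finrank_eq_finrank : Module.finrank k (TruncPoly k p) = Module.finrank k (Fin p → k) := by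
    rw [finrank_eq, Module.finrank_fin_fun]
  obtain ⟨y, hy⟩ :=
    (LinearMap.injective_iff_surjective_of_finrank_eq_finrank finrank_eq_finrank).mp injective c
  exact ⟨y, congrFun hy⟩

lemma exists_apply_eq_one_add {w : Witt k p} {a : k} (hw : pthPower p w = (-a) • w)
    (hwx : constCoeff k p (w (xgen k p)) ≠ 0) :
    ∃ y, constCoeff k p y = 0 ∧ w y = 1 + a • y ^ (p - 1) := by
  have two_le : 2 ≤ p := (Fact.out : p.Prime).two_le
  obtain ⟨y, hy⟩ := exists_constCoeff_pow_apply_eq hwx fun i ↦ if (i : ℕ) = 1 then 1 else 0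
  have hy₀ : constCoeff k p y = 0 := by simpa using hy ⟨0, by omega⟩
  have hy₁ : constCoeff k p (w y) = 1 := by simpa using hy ⟨1, by omega⟩
  refine ⟨y, hy₀, sub_eq_zero.mp (eq_zero_of_constCoeff_pow_apply_eq_zero hwx fun i hi ↦ ?_)⟩
  rw [map_sub, map_add, map_smul, map_sub, map_add, map_smul, sub_eq_zero]
  have pow_apply_apply : ((w : Module.End k (TruncPoly k p)) ^ i) (w y) =
      ((w : Module.End k (TruncPoly k p)) ^ (i + 1)) y := by
    rw [pow_succ, Module.End.mul_apply, Derivation.coeFn_coe]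
  rw [← mul_one (y ^ (p - 1)), pow_apply_apply]
  cases i with
  | zero => simp [hy₀, hy₁, show p - 1 ≠ 0 by omega]
  | succ i =>
    rw [derivation_pow_succ_apply_one, map_zero, zero_add]
    obtain hi | hi : i + 2 < p ∨ i + 2 = p := by omega
    · rw [hy ⟨i + 2, hi⟩, map_derivation_pow_pow_mul_of_lt w hy₀ (by omega)]
      simp
    · have pow_char_apply : ((w : Module.End k (TruncPoly k p)) ^ p) y = (-a) • w y := by
        rw [← pthPower_apply, hw, Derivation.smul_apply]
      rw [show i + 1 = p - 1 by omega, Nat.sub_add_cancel (by omega), pow_char_apply,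
        map_derivation_pow_pow_mul_self w hy₀, natCast_factorial_pred_eq_neg_one]
      simp [hy₁]

end TaylorCoefficients

variable {δ : Witt k p} (hδ : δ (xgen k p) = 1)
include hδ

lemma apply_eq_mul (w : Witt k p) (f : TruncPoly k p) : w f = w (xgen k p) * δ f := by
  have : w = w (xgen k p) • δ := ext_xgen (by simp [hδ])
  exact congr($this f)

lemma isFaithful : LieModule.IsFaithful k (Witt k p) (Witt k p) := by
  rw [LieAlgebra.isFaithful_self_iff, LieSubmodule.eq_bot_iff]
  intro u hu
  have commutator_apply_eq_zero (v : Witt k p) : v (u (xgen k p)) - u (v (xgen k p)) = 0 := by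
    rw [← Derivation.commutator_apply, hu v, Derivation.zero_apply]
  have hδu : δ (u (xgen k p)) = 0 := by simpa [hδ] using commutator_apply_eq_zero δ
  exact ext_xgen (by simpa [hδ, hδu] using commutator_apply_eq_zero (xgen k p • δ))

section NeZero

variable [NeZero p]

lemma constCoeff_apply (w : Witt k p) (f : TruncPoly k p) :
    constCoeff k p (w f) = constCoeff k p (w (xgen k p)) * constCoeff k p (δ f) := by
  rw [apply_eq_mul hδ, map_mul]

lemma constCoeff_delta_apply {w : Witt k p} (hw : constCoeff k p (w (xgen k p)) = 0)
    (f : TruncPoly k p) : constCoeff k p (δ (w f)) =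
      constCoeff k p (δ (w (xgen k p))) * constCoeff k p (δ f) := by
  rw [apply_eq_mul hδ w f, Derivation.leibniz]
  simp [hw, mul_comm]

lemma exists_lieEquiv_of_aeval {v w : Witt k p} {q : k[X]} {y : TruncPoly k p}
    (hy : constCoeff k p y = 0) (hδy : constCoeff k p (δ y) ≠ 0)
    (hv : v (xgen k p) = aeval (xgen k p) q) (hw : w y = aeval y q) :
    ∃ σ : Witt k p ≃ₗ⁅k⁆ Witt k p, σ v = w := by
  obtain ⟨u, rfl⟩ := xgen_dvd_iff.mpr hy
  have hu : IsUnit u := isUnit_iff.mpr (by simpa [hδ] using hδy)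
  obtain ⟨φ, hφ⟩ := exists_algEquiv_xgen_eq hu
  have conj_apply : derivationConj φ v (xgen k p * u) = w (xgen k p * u) := by
    rw [derivationConj_apply, ← hφ, φ.symm_apply_apply, hv, hφ, hw, ← hφ]
    exact (aeval_algHom_apply φ.toAlgHom _ q).symm
  refine ⟨derivationConj φ, ext_xgen ((isUnit_iff.mpr hδy).mul_right_cancel ?_)⟩
  rwa [← apply_eq_mul hδ, ← apply_eq_mul hδ]

lemma add_smul_ne_zero (hp : 1 < p) (a : k) : δ + a • xgen k p ^ (p - 1) • δ ≠ 0 := fun h ↦ by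
  simpa [hδ, Nat.sub_ne_zero_of_lt hp] using congr(constCoeff k p ($h (xgen k p)))

lemma smul_xgen_smul_ne_zero {b : k} (hb : b ≠ 0) : b • xgen k p • δ ≠ 0 := fun h ↦ by
  simpa [hδ, hb] using congr(constCoeff k p (δ ($h (xgen k p))))

end NeZero

section CharP

variable [Fact p.Prime] [CharP k p]

lemma pthPower_eq_zero {w : Witt k p} (hwx : constCoeff k p (w (xgen k p)) = 0)
    (hδw : constCoeff k p (δ (w (xgen k p))) = 0) : pthPower p w = 0 := by
  obtain ⟨g, hg⟩ := xgen_dvd_iff.mpr hwx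
  have sq_dvd_apply (f : TruncPoly k p) : xgen k p ^ 2 ∣ w f := by
    have : xgen k p ∣ g := xgen_dvd_iff.mpr (by simpa [hg, hδ] using hδw)
    rw [apply_eq_mul hδ, hg, sq]
    exact (mul_dvd_mul_left _ this).mul_right _
  ext f
  rw [Derivation.zero_apply, pthPower_apply, ← zero_dvd_iff, ← xgen_pow_char]
  exact pow_dvd_derivation_pow_apply sq_dvd_apply p f

lemma constCoeff_delta_apply_xgen_pow_pred {w : Witt k p} {a : k} (ha : a ≠ 0) (hw₀ : w ≠ 0)
    (hw : pthPower p w = (-a) • w) (hwx : constCoeff k p (w (xgen k p)) = 0) :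
    constCoeff k p (δ (w (xgen k p))) ^ (p - 1) = -a := by
  set b := constCoeff k p (δ (w (xgen k p)))
  have eval_eq_zero : b ^ p + a * b = 0 := by
    have := dual_aeval_apply_eq_eval_mul (T := (w : Module.End k (TruncPoly k p)))
      (ℓ := (constCoeff k p).toLinearMap ∘ₗ (δ : Module.End k (TruncPoly k p)))
      (constCoeff_delta_apply hδ hwx) (X ^ p + C a * X) (xgen k p)
    rw [aeval_eq_zero_of_pthPower_eq p hw] at this
    simpa [hδ] using this.symm
  have hb : b ≠ 0 := fun hb ↦ by
    have := hw.symm.trans (pthPower_eq_zero hδ hwx hb)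
    exact hw₀ ((smul_eq_zero_iff_right (neg_ne_zero.mpr ha)).mp this)
  refine mul_right_cancel₀ hb ?_
  rw [pow_sub_one_mul (Fact.out : p.Prime).ne_zero]
  linear_combination eval_eq_zero

lemma exists_apply_eq_smul {w : Witt k p} {a : k} (ha : a ≠ 0) (hw : pthPower p w = (-a) • w)
    (hwx : constCoeff k p (w (xgen k p)) = 0)
    (hb : constCoeff k p (δ (w (xgen k p))) ^ (p - 1) = -a) :
    ∃ y, constCoeff k p y = 0 ∧ constCoeff k p (δ y) ≠ 0 ∧
      w y = constCoeff k p (δ (w (xgen k p))) • y := by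
  obtain ⟨q, hq, eval_q⟩ := exists_X_sub_C_mul_eq p hb
  refine ⟨aeval (w : Module.End k (TruncPoly k p)) q (xgen k p), ?_, ?_, ?_⟩
  · have := dual_aeval_apply_eq_eval_mul (T := (w : Module.End k (TruncPoly k p)))
      (ℓ := (constCoeff k p).toLinearMap) (μ := 0)
      (fun f ↦ by simp [constCoeff_apply hδ w f, hwx]) q (xgen k p)
    simpa using this
  · have := dual_aeval_apply_eq_eval_mul (T := (w : Module.End k (TruncPoly k p)))
      (ℓ := (constCoeff k p).toLinearMap ∘ₗ (δ : Module.End k (TruncPoly k p)))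
      (constCoeff_delta_apply hδ hwx) q (xgen k p)
    rw [eval_q] at this
    exact ne_of_eq_of_ne (by simpa [hδ] using this) ha
  · have := congr(aeval (w : Module.End k (TruncPoly k p)) $hq (xgen k p))
    rw [aeval_eq_zero_of_pthPower_eq p hw, map_mul, map_sub, aeval_X, aeval_C,
      Module.End.mul_apply] at this
    simpa [sub_eq_zero] using this

lemma exists_lieEquiv_of_pthPower_eq {w : Witt k p} {a : k} (ha : a ≠ 0) (hw₀ : w ≠ 0)
    (hw : pthPower p w = (-a) • w) :
    (∃ σ : Witt k p ≃ₗ⁅k⁆ Witt k p, σ (δ + a • xgen k p ^ (p - 1) • δ) = w) ∨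
      ∃ b : k, b ^ (p - 1) = -a ∧ ∃ σ : Witt k p ≃ₗ⁅k⁆ Witt k p, σ (b • xgen k p • δ) = w := by
  have pred_ne_zero : p - 1 ≠ 0 := Nat.sub_ne_zero_of_lt (Fact.out : p.Prime).one_lt
  by_cases hwx : constCoeff k p (w (xgen k p)) = 0
  · have hb := constCoeff_delta_apply_xgen_pow_pred hδ ha hw₀ hw hwx
    obtain ⟨y, hy, hδy, hwy⟩ := exists_apply_eq_smul hδ ha hw hwx hb
    refine .inr ⟨_, hb, exists_lieEquiv_of_aeval hδ hy hδy
      (q := C (constCoeff k p (δ (w (xgen k p)))) * X) ?_ ?_⟩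
    · simp [hδ, ← Algebra.smul_def]
    · simp [hwy, ← Algebra.smul_def]
  · obtain ⟨y, hy, hwy⟩ := exists_apply_eq_one_add hw hwx
    have hδy : constCoeff k p (δ y) ≠ 0 := by
      intro h
      simpa [h, hwy, hy, pred_ne_zero] using constCoeff_apply hδ w y
    refine .inl (exists_lieEquiv_of_aeval hδ hy hδy (q := 1 + C a * X ^ (p - 1)) ?_ ?_)
    · simp [hδ, ← Algebra.smul_def]
    · simp [hwy, ← Algebra.smul_def]

lemma pthPower_add_smul (a : k) :
    pthPower p (δ + a • xgen k p ^ (p - 1) • δ) = (-a) • (δ + a • xgen k p ^ (p - 1) • δ) :=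
  ext_xgen (pthPower_apply_of_apply_eq_one_add p xgen_pow_char (by simp [hδ]))

lemma pthPower_smul_xgen_smul {a b : k} (hb : b ^ (p - 1) = -a) :
    pthPower p (b • xgen k p • δ) = (-a) • b • xgen k p • δ := by
  rw [← hb]
  exact ext_xgen (pthPower_apply_of_apply_eq_smul p (by simp [hδ]))

lemma pthPower_lieEquiv_apply_eq {v : Witt k p} (hv₀ : v ≠ 0) {c : k} (hv : pthPower p v = c • v)
    (σ : Witt k p ≃ₗ⁅k⁆ Witt k p) : σ v ≠ 0 ∧ pthPower p (σ v) = c • σ v := by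
  have := isFaithful hδ
  refine ⟨(map_ne_zero_iff σ σ.injective).mpr hv₀, ?_⟩
  rw [← map_pthPower, hv, map_smul]

end CharP

end Witt

theorem witt_Wminus_a_orbit_decomposition_general
    (k : Type*) [Field k] (p : ℕ) [Fact p.Prime] [CharP k p]
    (δ : Witt k p) (hδ : δ (xgen k p) = 1)
    (E : ℕ → Witt k p) (hE : ∀ n, E n = (xgen k p) ^ n • δ)
    (a : k) (ha : a ≠ 0) :
    {w : Witt k p | w ≠ 0 ∧
        (w.toLinearMap : Module.End k (TruncPoly k p)) ^ p
          = (-a) • (w.toLinearMap : Module.End k (TruncPoly k p))}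
      = {w : Witt k p | ∃ σ : Witt k p ≃ₗ⁅k⁆ Witt k p, σ (E 0 + a • E (p - 1)) = w}
        ∪ ⋃ b ∈ {b : k | b ^ (p - 1) = -a},
            {w : Witt k p | ∃ σ : Witt k p ≃ₗ⁅k⁆ Witt k p, σ (b • E 1) = w} := by
  ext w
  simp only [Set.mem_union, Set.mem_iUnion, Set.mem_ofPred_eq, exists_prop, hE, pow_zero, one_smul,
    pow_one, ← pthPower_eq_smul_iff]
  constructor
  · rintro ⟨hw₀, hw⟩
    exact Witt.exists_lieEquiv_of_pthPower_eq hδ ha hw₀ hw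
  · rintro (⟨σ, rfl⟩ | ⟨b, hb, σ, rfl⟩)
    · exact Witt.pthPower_lieEquiv_apply_eq hδ
        (Witt.add_smul_ne_zero hδ (Fact.out : p.Prime).one_lt a) (Witt.pthPower_add_smul hδ a) σ
    · have hb₀ : b ≠ 0 := by
        rintro rfl
        exact ha (by simpa [Nat.sub_ne_zero_of_lt (Fact.out : p.Prime).one_lt] using hb)
      exact Witt.pthPower_lieEquiv_apply_eq hδ (Witt.smul_xgen_smul_ne_zero hδ hb₀)
        (Witt.pthPower_smul_xgen_smul hδ hb) σ

/-- for `a ≠ 0`, the set `W(-a) = {w ≠ 0 : w^p = -a·w}` (powers as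
endomorphisms of `A`) equals the union of the `G`-orbit of `e₋₁ + a·e_(p-2)` and the
`G`-orbits of `b·e₀` over all `b` with `b^(p-1) = -a`. -/
theorem witt_Wminus_a_orbit_decomposition
    (k : Type*) [Field k] [IsAlgClosed k] (p : ℕ) [Fact p.Prime] [CharP k p]
    (hp : 3 < p)
    (δ : Witt k p) (hδ : δ (xgen k p) = 1)
    (E : ℕ → Witt k p) (hE : ∀ n, E n = (xgen k p) ^ n • δ)
    (a : k) (ha : a ≠ 0) :
    {w : Witt k p | w ≠ 0 ∧
        (w.toLinearMap : Module.End k (TruncPoly k p)) ^ p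
          = (-a) • (w.toLinearMap : Module.End k (TruncPoly k p))}
      = {w : Witt k p | ∃ σ : Witt k p ≃ₗ⁅k⁆ Witt k p, σ (E 0 + a • E (p - 1)) = w}
        ∪ ⋃ b ∈ {b : k | b ^ (p - 1) = -a},
            {w : Witt k p | ∃ σ : Witt k p ≃ₗ⁅k⁆ Witt k p, σ (b • E 1) = w} :=
  witt_Wminus_a_orbit_decomposition_general k p δ hδ E hE a ha
end
end
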